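/- arXiv:1703.01044 — 2 statements merged into one kernel-verified Lean document; each statement's English description precedes it below -/
import Mathlib

section
/- Let n ≥ 1 and j ≥ 1 be integers, let R₁, …, R_j be nonnegative integers with R₁ + ⋯ + R_j ≤ n − j, set γ_v = n − v + 1 − Σ_{u=1}^{v−1} R_u for 1 ≤ v ≤ j + 1, and let θ > 0, T > 0 and an integer i with 1 ≤ i ≤ j. Let μ be the measure on ℝ^j whose density with respect to Lebesgue measure is z ↦ 1_{0 < z₁ < ⋯ < z_j < T} · exp(−(1/θ)(Σ_{s=1}^{j} z_s(1 + R_s) + T γ_{j+1})), and let g(z) = (Σ_{s=1}^{j} z_s(1 + R_s) + T γ_{j+1})/i. Then the pushforward measure g_*μ has Lebesgue density x ↦ θ^j Σ_{v=0}^{j} [ (−1)^v e^{−(T/θ) γ_{j−v+1}} / ( (∏_{h=1}^{v} (γ_{j+1−v} − γ_{j+1−v+h})) (∏_{h=1}^{j−v} (γ_h − γ_{j−v+1})) ) ] · f_G(x; Tγ_{j−v+1}/i, j, i/θ). (This is the conditional density of the MLE θ̂₁ = W/D₁ given J = j failures before T with D₁ = i due to cause 1, up to the common normalizing constant.) -/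
open MeasureTheory

/-- `γ_v = n − v + 1 − Σ_{u=1}^{v−1} R_u`, the number of surviving units at the time of the
`v`-th failure in a progressive censoring scheme with removals `R 1, R 2, …`. -/
noncomputable def gam (n : ℕ) (R : ℕ → ℕ) (v : ℕ) : ℝ :=
  (n : ℝ) - v + 1 - ∑ u ∈ Finset.Icc 1 (v - 1), (R u : ℝ)

/-- `fG x a b c`: density at `x` of the shifted Gamma distribution with shift `a`,
shape `b` and rate `c`, i.e. `(c^b/Γ(b)) (x − a)^{b−1} e^{−c(x−a)}` for `x > a`. -/
noncomputable def fG (x a b c : ℝ) : ℝ :=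
  if a < x then c ^ b / Real.Gamma b * (x - a) ^ (b - 1) * Real.exp (-c * (x - a)) else 0

/-!
Up to the scale `1 / i` and the factor `exp (-W / θ)`, which depends on `z` only through `W`, the
claim computes the image of Lebesgue measure on the simplex `0 < z₁ < ⋯ < z_j < T` under the linear
form `W = ∑ z_s (γ_s - γ_{s+1}) + T γ_{j+1}`. By the Hermite–Genocchi formula the density of this
image is a divided difference of truncated powers with nodes given by the `γ_v`: fixing the largest
coordinate `z_j = t` leaves the same problem in dimension `j - 1` with `T` replaced by `t` and `W`
shifted by `(T - t) γ_{j+1}`, and integrating the resulting truncated powers over `t` adjoins the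
node `γ_{j+1}`. Exponentially tilted, each truncated power is a shifted Gamma density.
-/

open Finset (range)
open Lagrange (nodalWeight)

section NodalWeight

variable {ι F : Type*} [DecidableEq ι] [Field F] {s : Finset ι} {v : ι → F} {i j : ι}

lemma nodalWeight_insert_of_mem (hi : i ∉ s) (hj : j ∈ s) :
    nodalWeight (insert i s) v j = nodalWeight s v j * (v j - v i)⁻¹ := by
  rw [nodalWeight, Finset.erase_insert_of_ne (ne_of_mem_of_not_mem hj hi).symm,
    Finset.prod_insert (fun h => hi (Finset.mem_of_mem_erase h)), mul_comm, nodalWeight]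

lemma nodalWeight_insert_self (hi : i ∉ s) (hs : s.Nonempty) (hv : Set.InjOn v ↑(insert i s)) :
    nodalWeight (insert i s) v i = ∑ j ∈ s, nodalWeight s v j * (v i - v j)⁻¹ := by
  have hne : ∀ j ∈ s, v i ≠ v j := fun j hj h =>
    hi (hv (by simp) (by simp [hj]) h ▸ hj)
  -- Evaluate at `v i` the barycentric form of the interpolant of the constant `1`.
  have h := Lagrange.eval_interpolate_not_at_node 1 hne
  rw [Lagrange.interpolate_one (hv.mono (by simp)) hs, Polynomial.eval_one,
    Lagrange.eval_nodal] at h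
  rw [nodalWeight, Finset.erase_insert hi, Finset.prod_inv_distrib]
  simpa only [Pi.one_apply, mul_one] using (eq_inv_of_mul_eq_one_right h.symm).symm

lemma sum_nodalWeight_insert_mul (hi : i ∉ s) (hs : s.Nonempty) (hv : Set.InjOn v ↑(insert i s))
    (f : ι → F) :
    ∑ j ∈ insert i s, nodalWeight (insert i s) v j * f j =
      ∑ j ∈ s, nodalWeight s v j * ((v i - v j)⁻¹ * (f i - f j)) := by
  rw [Finset.sum_insert hi, nodalWeight_insert_self hi hs hv, Finset.sum_mul,
    ← Finset.sum_add_distrib]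
  refine Finset.sum_congr rfl fun j hj => ?_
  rw [nodalWeight_insert_of_mem hi hj, ← neg_sub (v i) (v j), inv_neg]
  ring

lemma nodalWeight_range_neg (γ : ℕ → F) (m k : ℕ) :
    nodalWeight (range (m + k + 1)) (-fun l => γ (l + 1)) m =
      (-1) ^ k / ((∏ h ∈ Finset.Icc 1 k, (γ (m + 1) - γ (m + 1 + h))) *
        ∏ h ∈ Finset.Icc 1 m, (γ h - γ (m + 1))) := by
  induction k with
  | zero =>
    rw [← Finset.Ico_add_one_right_eq_Icc 1 m, ← zero_add 1,
      ← Finset.prod_Ico_add' (fun h => γ h - γ (m + 1)) 0 m 1]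
    simp [nodalWeight, Finset.range_add_one, neg_add_eq_sub]
  | succ k ih =>
    rw [← add_assoc, Finset.range_add_one, nodalWeight_insert_of_mem Finset.notMem_range_self
      (by simp), ih, Finset.prod_Icc_succ_top (Nat.le_add_left 1 k), Pi.neg_apply, Pi.neg_apply,
      neg_sub_neg, ← neg_sub (γ (m + 1)), inv_neg, show m + k + 1 + 1 = m + 1 + (k + 1) by lia]
    simp only [div_eq_mul_inv, mul_inv]
    ring

end NodalWeight

/-- The truncated power `x₊ᵏ / k!`, with value `0` at `x = 0` also for `k = 0`. -/
noncomputable def truncPow (k : ℕ) (x : ℝ) : ℝ :=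
  if 0 < x then x ^ k / (k.factorial : ℝ) else 0

section TruncPow

variable (k : ℕ)

lemma truncPow_of_pos {x : ℝ} (hx : 0 < x) : truncPow k x = x ^ k / (k.factorial : ℝ) := if_pos hx

lemma truncPow_of_nonpos {x : ℝ} (hx : x ≤ 0) : truncPow k x = 0 := if_neg hx.not_gt

lemma monotone_truncPow : Monotone (truncPow k) := by
  intro x y hxy
  rcases le_or_gt x 0 with hx | hx
  · rw [truncPow_of_nonpos k hx, truncPow]
    split_ifs <;> positivity
  · rw [truncPow_of_pos k hx, truncPow_of_pos k (hx.trans_le hxy)]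
    gcongr

@[fun_prop]
lemma measurable_truncPow : Measurable (truncPow k) := (monotone_truncPow k).measurable

lemma truncPow_succ_eq_max_pow (x : ℝ) :
    truncPow (k + 1) x = max x 0 ^ (k + 1) / ((k + 1).factorial : ℝ) := by
  rcases le_or_gt x 0 with hx | hx
  · simp [truncPow_of_nonpos _ hx, max_eq_right hx]
  · rw [truncPow_of_pos _ hx, max_eq_left hx.le]

lemma continuous_truncPow_succ : Continuous (truncPow (k + 1)) := by
  simp only [funext (truncPow_succ_eq_max_pow k)]
  fun_prop

lemma hasDerivAt_truncPow_succ {x : ℝ} (hx : x ≠ 0) :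
    HasDerivAt (truncPow (k + 1)) (truncPow k x) x := by
  rcases hx.lt_or_gt with hx | hx
  · rw [truncPow_of_nonpos k hx.le]
    refine (hasDerivAt_const x 0).congr_of_eventuallyEq ?_
    filter_upwards [Iio_mem_nhds hx] with y hy
    exact truncPow_of_nonpos _ (le_of_lt hy)
  · have h : HasDerivAt (fun y : ℝ => y ^ (k + 1) / ((k + 1).factorial : ℝ)) (truncPow k x) x := by
      refine ((hasDerivAt_pow (k + 1) x).div_const _).congr_deriv ?_
      rw [truncPow_of_pos k hx, Nat.factorial_succ, Nat.add_sub_cancel, Nat.cast_mul,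
        mul_div_mul_left _ _ (by positivity)]
    refine h.congr_of_eventuallyEq ?_
    filter_upwards [Ioi_mem_nhds hx] with y hy
    exact truncPow_of_pos _ hy

lemma integral_truncPow (u v : ℝ) :
    ∫ x in u..v, truncPow k x = truncPow (k + 1) v - truncPow (k + 1) u :=
  integral_eq_of_hasDerivAt_off_countable _ _ (Set.countable_singleton 0)
    (continuous_truncPow_succ k).continuousOn (fun _ hx => hasDerivAt_truncPow_succ k hx.2)
    (monotone_truncPow k).intervalIntegrable

lemma intervalIntegrable_truncPow_sub_mul (c d u v : ℝ) :
    IntervalIntegrable (fun t => truncPow k (c - d * t)) volume u v := by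
  rcases le_total 0 d with hd | hd
  · exact ((monotone_truncPow k).comp_antitone fun s t hst =>
      sub_le_sub_left (mul_le_mul_of_nonneg_left hst hd) c).intervalIntegrable
  · exact ((monotone_truncPow k).comp fun s t hst =>
      sub_le_sub_left (mul_le_mul_of_nonpos_left hst hd) c).intervalIntegrable

lemma integral_truncPow_sub_mul {d : ℝ} (hd : d ≠ 0) (c T : ℝ) :
    ∫ t in (0 : ℝ)..T, truncPow k (c - d * t) =
      d⁻¹ * (truncPow (k + 1) c - truncPow (k + 1) (c - d * T)) := by
  rw [intervalIntegral.integral_comp_sub_mul _ hd, integral_truncPow, smul_eq_mul, mul_zero,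
    sub_zero]

lemma truncPow_mul {c : ℝ} (hc : 0 < c) (x : ℝ) : truncPow k (c * x) = c ^ k * truncPow k x := by
  rcases le_or_gt x 0 with hx | hx
  · rw [truncPow_of_nonpos k hx, truncPow_of_nonpos k (mul_nonpos_of_nonneg_of_nonpos hc.le hx),
      mul_zero]
  · rw [truncPow_of_pos k hx, truncPow_of_pos k (mul_pos hc hx), mul_pow, mul_div_assoc]

end TruncPow

/-- The divided difference of `v ↦ (w + T * v)₊ᵏ / k!` at the nodes `-a 0, …, -a (k + 1)`. This is
the density at `w` of `totalTimeOnTest (k + 1) a T` on `orderedSimplex (k + 1) T`. -/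
noncomputable def splineDensity (k : ℕ) (a : ℕ → ℝ) (T w : ℝ) : ℝ :=
  ∑ m ∈ range (k + 2), nodalWeight (range (k + 2)) (-a) m * truncPow k (w - T * a m)

section SplineDensity

variable {k : ℕ} {a : ℕ → ℝ} {T w : ℝ}

lemma splineDensity_zero (ha : Set.InjOn a (range 2)) :
    splineDensity 0 a T w =
      (a 0 - a 1)⁻¹ * (truncPow 0 (w - T * a 1) - truncPow 0 (w - T * a 0)) := by
  rw [Finset.range_add_one] at ha
  rw [splineDensity, Finset.range_add_one, sum_nodalWeight_insert_mul (v := -a)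
    Finset.notMem_range_self (by simp) (neg_injective.comp_injOn ha), Finset.sum_range_one]
  simp [nodalWeight, neg_add_eq_sub]

lemma splineDensity_slice (t : ℝ) :
    splineDensity k a t (w - (T - t) * a (k + 2)) =
      ∑ m ∈ range (k + 2), nodalWeight (range (k + 2)) (-a) m *
        truncPow k (w - T * a (k + 2) - (a m - a (k + 2)) * t) := by
  refine Finset.sum_congr rfl fun m _ => ?_
  ring_nf

lemma intervalIntegrable_splineDensity_slice :
    IntervalIntegrable (fun t => splineDensity k a t (w - (T - t) * a (k + 2))) volume 0 T := by
  simp only [splineDensity_slice]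
  simpa only [Finset.sum_fn] using IntervalIntegrable.sum (range (k + 2)) fun m _ =>
    (intervalIntegrable_truncPow_sub_mul k (w - T * a (k + 2)) (a m - a (k + 2)) 0 T).const_mul
      (nodalWeight (range (k + 2)) (-a) m)

lemma integral_splineDensity_slice (ha : Set.InjOn a (range (k + 3))) :
    ∫ t in (0 : ℝ)..T, splineDensity k a t (w - (T - t) * a (k + 2)) =
      splineDensity (k + 1) a T w := by
  rw [Finset.range_add_one] at ha
  rw [splineDensity, Finset.range_add_one, sum_nodalWeight_insert_mul (v := -a)
    Finset.notMem_range_self (by simp) (neg_injective.comp_injOn ha)]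
  simp only [splineDensity_slice]
  rw [intervalIntegral.integral_finsetSum
    fun m _ => (intervalIntegrable_truncPow_sub_mul k _ _ _ _).const_mul _]
  refine Finset.sum_congr rfl fun m hm => ?_
  have hm : m < k + 2 := Finset.mem_range.1 hm
  have hne : a m - a (k + 2) ≠ 0 := sub_ne_zero.2 fun h =>
    hm.ne (ha (by simp [hm.le]) (by simp) h)
  rw [intervalIntegral.integral_const_mul, integral_truncPow_sub_mul k hne, Pi.neg_apply,
    Pi.neg_apply, neg_sub_neg]
  ring_nf

lemma splineDensity_nonneg (ha : Set.InjOn a (range (k + 2))) (hT : 0 ≤ T) :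
    0 ≤ splineDensity k a T w := by
  induction k generalizing T w with
  | zero =>
    rw [splineDensity_zero ha]
    rcases le_total (a 0) (a 1) with h | h
    · exact mul_nonneg_of_nonpos_of_nonpos (inv_nonpos.2 (sub_nonpos.2 h))
        (sub_nonpos.2 (monotone_truncPow 0 (by gcongr)))
    · exact mul_nonneg (inv_nonneg.2 (sub_nonneg.2 h))
        (sub_nonneg.2 (monotone_truncPow 0 (by gcongr)))
  | succ k ih =>
    rw [← integral_splineDensity_slice ha]
    exact intervalIntegral.integral_nonneg hT fun t ht =>
      ih (ha.mono (by simp)) ht.1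

@[fun_prop]
lemma measurable_splineDensity {α : Type*} [MeasurableSpace α] {f g : α → ℝ} (hf : Measurable f)
    (hg : Measurable g) : Measurable fun x => splineDensity k a (f x) (g x) := by
  unfold splineDensity
  fun_prop

lemma lintegral_splineDensity_slice (ha : Set.InjOn a (range (k + 3))) (hT : 0 ≤ T) :
    ∫⁻ t in Set.Ioo 0 T, ENNReal.ofReal (splineDensity k a t (w - (T - t) * a (k + 2))) =
      ENNReal.ofReal (splineDensity (k + 1) a T w) := by
  have ha' : Set.InjOn a (range (k + 2)) := ha.mono (by simp)
  rw [← integral_splineDensity_slice ha, intervalIntegral.integral_of_le hT,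
    setLIntegral_congr Ioo_ae_eq_Ioc, ofReal_integral_eq_lintegral_ofReal
      ((intervalIntegrable_iff_integrableOn_Ioc_of_le hT).1 intervalIntegrable_splineDensity_slice)]
  filter_upwards [ae_restrict_mem measurableSet_Ioc] with t ht
  exact splineDensity_nonneg ha' ht.1.le

lemma abs_mul_splineDensity_zero_ae_eq (ha : Set.InjOn a (range 2)) (hT : 0 ≤ T) :
    (fun t => |a 0 - a 1| * splineDensity 0 a T (T * a 1 + (a 0 - a 1) * t)) =ᵐ[volume]
      (Set.Ioo 0 T).indicator 1 := by
  have hd : a 0 - a 1 ≠ 0 := sub_ne_zero.2 (ha.ne (by simp) (by simp) zero_ne_one)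
  filter_upwards [Measure.ae_ne volume 0, Measure.ae_ne volume T] with t ht0 htT
  rw [splineDensity_zero ha, show T * a 1 + (a 0 - a 1) * t - T * a 1 = (a 0 - a 1) * t by ring,
    show T * a 1 + (a 0 - a 1) * t - T * a 0 = (a 0 - a 1) * (t - T) by ring]
  generalize a 0 - a 1 = d at hd
  rcases hd.lt_or_gt with hd | hd <;> rcases ht0.lt_or_gt with ht0 | ht0 <;>
    rcases htT.lt_or_gt with htT | htT <;>
    first
    | exact absurd (htT.trans ht0) hT.not_gt
    | simp [truncPow, Set.indicator, mul_pos_iff, hd, hd.ne, hd.ne', hd.not_gt, ht0, ht0.not_gt,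
        htT, htT.not_gt, abs_of_pos, abs_of_neg]

end SplineDensity

/-- The chamber `0 < z₁ < ⋯ < z_j < T` in which the first `j` failure times lie. -/
def orderedSimplex (j : ℕ) (T : ℝ) : Set (Fin j → ℝ) :=
  {z | StrictMono z ∧ ∀ h, 0 < z h ∧ z h < T}

/-- The total time on test `W = Σ_s z_s (1 + R_s) + T γ_{j+1}` at time `T`, where `a s` is the
number `γ_{s+1}` of units at risk after `s` failures, so that `1 + R_s = a (s - 1) - a s`. -/
noncomputable def totalTimeOnTest (j : ℕ) (a : ℕ → ℝ) (T : ℝ) (z : Fin j → ℝ) : ℝ :=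
  (∑ h : Fin j, z h * (a h - a (h + 1))) + T * a j

section OrderedSimplex

variable {j k : ℕ} {a : ℕ → ℝ} {T : ℝ}

@[fun_prop]
lemma measurable_totalTimeOnTest : Measurable (totalTimeOnTest j a T) := by
  unfold totalTimeOnTest
  fun_prop

lemma measurableSet_orderedSimplex : MeasurableSet (orderedSimplex j T) := by
  simp only [orderedSimplex, StrictMono, Set.ofPred_and, Set.ofPred_forall]
  refine .inter (.iInter fun x => .iInter fun y => .iInter fun _ => ?_) (.iInter fun h => ?_)
  · exact measurableSet_lt (measurable_pi_apply x) (measurable_pi_apply y)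
  · exact (measurableSet_lt measurable_const (measurable_pi_apply h)).inter
      (measurableSet_lt (measurable_pi_apply h) measurable_const)

lemma snoc_mem_orderedSimplex_iff {t : ℝ} {z : Fin j → ℝ} :
    Fin.snoc (α := fun _ => ℝ) z t ∈ orderedSimplex (j + 1) T ↔
      t ∈ Set.Ioo 0 T ∧ z ∈ orderedSimplex j t := by
  constructor
  · rintro ⟨hmono, hbd⟩
    refine ⟨by simpa using hbd (Fin.last j), fun x y hxy => ?_, fun h => ⟨?_, ?_⟩⟩
    · simpa using hmono (Fin.castSucc_lt_castSucc_iff.2 hxy)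
    · simpa using (hbd h.castSucc).1
    · simpa using hmono (Fin.castSucc_lt_last h)
  · rintro ⟨ht, hmono, hbd⟩
    refine ⟨fun x y hxy => ?_, Fin.lastCases (by simpa using ht) fun h => ?_⟩
    · cases x using Fin.lastCases with
      | last => exact absurd hxy (Fin.le_last y).not_gt
      | cast x =>
        cases y using Fin.lastCases with
        | last => simpa using (hbd x).2
        | cast y => simpa using hmono (Fin.castSucc_lt_castSucc_iff.1 hxy)
    · simpa using And.intro (hbd h).1 ((hbd h).2.trans ht.2)

lemma totalTimeOnTest_snoc (t : ℝ) (z : Fin j → ℝ) :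
    totalTimeOnTest (j + 1) a T (Fin.snoc (α := fun _ => ℝ) z t) =
      totalTimeOnTest j a t z + (T - t) * a (j + 1) := by
  simp only [totalTimeOnTest, Fin.sum_univ_castSucc, Fin.snoc_castSucc, Fin.snoc_last,
    Fin.val_castSucc, Fin.val_last]
  ring

lemma lintegral_fin_snoc {f : (Fin (j + 1) → ℝ) → ENNReal} (hf : Measurable f) :
    ∫⁻ z, f z = ∫⁻ t, ∫⁻ z, f (Fin.snoc (α := fun _ => ℝ) z t) := by
  let e := (MeasurableEquiv.piFinSuccAbove (fun _ : Fin (j + 1) => ℝ) (Fin.last j)).symm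
  have he : MeasurePreserving e (volume.prod volume) volume :=
    (volume_preserving_piFinSuccAbove (fun _ => ℝ) (Fin.last j)).symm
  have he_apply (p : ℝ × (Fin j → ℝ)) : e p = Fin.snoc (α := fun _ => ℝ) p.2 p.1 :=
    Fin.insertNth_last' p.1 p.2
  rw [← he.lintegral_comp hf,
    lintegral_prod (fun p => f (e p)) (hf.comp e.measurable).aemeasurable]
  simp only [he_apply]

lemma setLIntegral_orderedSimplex_succ {f : (Fin (j + 1) → ℝ) → ENNReal} (hf : Measurable f) :
    ∫⁻ z in orderedSimplex (j + 1) T, f z =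
      ∫⁻ t in Set.Ioo 0 T, ∫⁻ z in orderedSimplex j t, f (Fin.snoc (α := fun _ => ℝ) z t) := by
  rw [← lintegral_indicator measurableSet_orderedSimplex,
    lintegral_fin_snoc (hf.indicator measurableSet_orderedSimplex),
    ← lintegral_indicator measurableSet_Ioo]
  refine lintegral_congr fun t => ?_
  by_cases ht : t ∈ Set.Ioo 0 T
  · rw [Set.indicator_of_mem ht, ← lintegral_indicator measurableSet_orderedSimplex]
    refine lintegral_congr fun z => ?_
    by_cases hz : z ∈ orderedSimplex j t <;>
      simp [Set.indicator, snoc_mem_orderedSimplex_iff, ht, hz]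
  · simp [Set.indicator, snoc_mem_orderedSimplex_iff, ht]

lemma lintegral_eq_mul_lintegral_comp_add_mul {d : ℝ} (hd : d ≠ 0) (c : ℝ) (f : ℝ → ENNReal) :
    ∫⁻ w, f w = ENNReal.ofReal |d| * ∫⁻ t, f (c + d * t) := by
  have h := lintegral_map_equiv (μ := volume) (fun w => f (c + w))
    (Homeomorph.mulLeft₀ d hd).toMeasurableEquiv
  simp only [Homeomorph.toMeasurableEquiv_coe, Homeomorph.coe_mulLeft₀] at h
  rw [← h, ← smul_eq_mul, ← lintegral_smul_measure, Real.smul_map_volume_mul_left hd,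
    lintegral_add_left_eq_self]

lemma setLIntegral_orderedSimplex_one_comp_totalTimeOnTest {F : ℝ → ENNReal} (hF : Measurable F)
    (ha : Set.InjOn a (range 2)) (hT : 0 ≤ T) :
    ∫⁻ z in orderedSimplex 1 T, F (totalTimeOnTest 1 a T z) =
      ∫⁻ w, ENNReal.ofReal (splineDensity 0 a T w) * F w := by
  have hd : a 0 - a 1 ≠ 0 := sub_ne_zero.2 (ha.ne (by simp) (by simp) zero_ne_one)
  have hslice (t : ℝ) : ∫⁻ z in orderedSimplex 0 t, F (totalTimeOnTest 1 a T (Fin.snoc z t)) =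
      F (T * a 1 + (a 0 - a 1) * t) := by
    have huniv : orderedSimplex 0 t = Set.univ :=
      Set.eq_univ_of_forall fun _ => ⟨fun x => x.elim0, fun x => x.elim0⟩
    rw [huniv, setLIntegral_univ, Measure.volume_pi_eq_dirac, lintegral_dirac,
      totalTimeOnTest_snoc]
    congr 1
    simp only [totalTimeOnTest, Fin.sum_univ_zero, zero_add]
    ring
  rw [setLIntegral_orderedSimplex_succ (f := fun z => F (totalTimeOnTest 1 a T z)) (by fun_prop)]
  simp only [hslice]
  rw [lintegral_eq_mul_lintegral_comp_add_mul hd (T * a 1), ← lintegral_indicator measurableSet_Ioo,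
    ← lintegral_const_mul' _ _ ENNReal.ofReal_ne_top]
  refine lintegral_congr_ae ?_
  filter_upwards [abs_mul_splineDensity_zero_ae_eq ha hT] with t ht
  rw [← mul_assoc, ← ENNReal.ofReal_mul (abs_nonneg _), ht]
  by_cases htT : t ∈ Set.Ioo 0 T <;> simp [htT]

lemma setLIntegral_orderedSimplex_comp_totalTimeOnTest {F : ℝ → ENNReal} (hF : Measurable F)
    (ha : Set.InjOn a (range (k + 2))) (hT : 0 ≤ T) :
    ∫⁻ z in orderedSimplex (k + 1) T, F (totalTimeOnTest (k + 1) a T z) =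
      ∫⁻ w, ENNReal.ofReal (splineDensity k a T w) * F w := by
  induction k generalizing T F with
  | zero => exact setLIntegral_orderedSimplex_one_comp_totalTimeOnTest hF ha hT
  | succ k ih =>
    have hslice (t : ℝ) (ht : t ∈ Set.Ioo 0 T) :
        ∫⁻ z in orderedSimplex (k + 1) t, F (totalTimeOnTest (k + 2) a T (Fin.snoc z t)) =
          ∫⁻ w, ENNReal.ofReal (splineDensity k a t (w - (T - t) * a (k + 2))) * F w := by
      simp only [totalTimeOnTest_snoc]
      rw [ih (F := fun w => F (w + (T - t) * a (k + 2))) (by fun_prop) (ha.mono (by simp)) ht.1.le,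
        ← lintegral_sub_right_eq_self _ ((T - t) * a (k + 2))]
      simp only [sub_add_cancel]
    rw [setLIntegral_orderedSimplex_succ (f := fun z => F (totalTimeOnTest (k + 2) a T z))
        (by fun_prop), setLIntegral_congr_fun measurableSet_Ioo hslice,
      lintegral_lintegral_swap (by fun_prop)]
    refine lintegral_congr fun w => ?_
    rw [lintegral_mul_const _ (by fun_prop), lintegral_splineDensity_slice ha hT]

lemma map_restrict_totalTimeOnTest (ha : Set.InjOn a (range (k + 2))) (hT : 0 ≤ T) :
    (volume.restrict (orderedSimplex (k + 1) T)).map (totalTimeOnTest (k + 1) a T) =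
      volume.withDensity fun w => ENNReal.ofReal (splineDensity k a T w) := by
  refine Measure.ext_of_lintegral _ fun F hF => ?_
  rw [lintegral_map hF measurable_totalTimeOnTest,
    setLIntegral_orderedSimplex_comp_totalTimeOnTest hF ha hT,
    lintegral_withDensity_eq_lintegral_mul _ (by fun_prop) hF]
  simp only [Pi.mul_apply]

end OrderedSimplex

section Pushforward

variable {α β : Type*} [MeasurableSpace α] [MeasurableSpace β]

lemma map_withDensity_comp (μ : Measure α) {f : α → β} (hf : Measurable f) {g : β → ENNReal}
    (hg : Measurable g) :
    (μ.withDensity fun x => g (f x)).map f = (μ.map f).withDensity g := by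
  ext s hs
  rw [Measure.map_apply hf hs, withDensity_apply _ (hf hs), withDensity_apply _ hs,
    setLIntegral_map hs hg hf]

lemma map_div_withDensity {c : ℝ} (hc : c ≠ 0) {ρ : ℝ → ENNReal} (hρ : Measurable ρ) :
    (volume.withDensity ρ).map (· / c) =
      volume.withDensity fun x => ENNReal.ofReal |c| * ρ (c * x) := by
  refine Measure.ext_of_lintegral _ fun F hF => ?_
  rw [lintegral_map hF (by fun_prop), lintegral_withDensity_eq_lintegral_mul _ hρ (by fun_prop),
    lintegral_withDensity_eq_lintegral_mul _ (by fun_prop) hF,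
    lintegral_eq_mul_lintegral_comp_add_mul hc 0, ← lintegral_const_mul _ (by fun_prop)]
  simp only [Pi.mul_apply, zero_add, mul_div_cancel_left₀ _ hc, mul_assoc]

lemma withDensity_ofReal_indicator (μ : Measure α) {s : Set α} (hs : MeasurableSet s)
    (f : α → ℝ) :
    (μ.withDensity fun x => ENNReal.ofReal (s.indicator f x)) =
      (μ.restrict s).withDensity fun x => ENNReal.ofReal (f x) := by
  rw [← withDensity_indicator hs]
  exact congrArg μ.withDensity (Set.indicator_comp_of_zero ENNReal.ofReal_zero).symm

end Pushforward

section Density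

variable {k : ℕ} {a : ℕ → ℝ} {θ T c : ℝ}

lemma map_totalTimeOnTest_div_withDensity {f : ℝ → ℝ} (hf : Measurable f)
    (ha : Set.InjOn a (range (k + 2))) (hT : 0 ≤ T) (hc : c ≠ 0) :
    ((volume.restrict (orderedSimplex (k + 1) T)).withDensity fun z =>
        ENNReal.ofReal (f (totalTimeOnTest (k + 1) a T z))).map
          (fun z => totalTimeOnTest (k + 1) a T z / c) =
      volume.withDensity fun x =>
        ENNReal.ofReal (|c| * (splineDensity k a T (c * x) * f (c * x))) := by
  rw [← Function.comp_def (· / c), ← Measure.map_map (by fun_prop) measurable_totalTimeOnTest,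
    map_withDensity_comp (g := fun w => ENNReal.ofReal (f w)) _ measurable_totalTimeOnTest
      (by fun_prop),
    map_restrict_totalTimeOnTest ha hT, ← withDensity_mul _ (by fun_prop) (by fun_prop),
    map_div_withDensity hc (by fun_prop)]
  simp only [Pi.mul_apply, ENNReal.ofReal_mul (abs_nonneg c),
    ENNReal.ofReal_mul (splineDensity_nonneg ha hT)]

lemma fG_natCast_succ (x s r : ℝ) :
    fG x s (k + 1 : ℕ) r = r ^ (k + 1) * truncPow k (x - s) * Real.exp (-r * (x - s)) := by
  rw [fG, truncPow, Real.rpow_natCast, Nat.cast_succ, Real.Gamma_nat_eq_factorial,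
    add_sub_cancel_right, Real.rpow_natCast]
  simp only [sub_pos]
  split_ifs <;> ring

lemma exp_mul_truncPow_eq_fG (hθ : θ ≠ 0) (hc : 0 < c) (b x : ℝ) :
    c * (truncPow k (c * x - T * b) * Real.exp (-(1 / θ) * (c * x))) =
      θ ^ (k + 1) * (Real.exp (-(T / θ) * b) * fG x (T * b / c) (k + 1 : ℕ) (c / θ)) := by
  have hshift : c * x - T * b = c * (x - T * b / c) := by field_simp
  have hexp : Real.exp (-(1 / θ) * (c * x)) =
      Real.exp (-(T / θ) * b) * Real.exp (-(c / θ) * (x - T * b / c)) := by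
    rw [← Real.exp_add]
    congr 1
    field_simp
    ring
  rw [fG_natCast_succ, hexp, hshift, truncPow_mul k hc, div_pow]
  field_simp
  ring

lemma splineDensity_mul_exp_eq_sum_fG (γ : ℕ → ℝ) (hθ : θ ≠ 0) (hc : 0 < c) (x : ℝ) :
    c * (splineDensity k (fun m => γ (m + 1)) T (c * x) * Real.exp (-(1 / θ) * (c * x))) =
      θ ^ (k + 1) * ∑ v ∈ range (k + 2),
        (-1) ^ v * Real.exp (-(T / θ) * γ (k + 1 - v + 1)) /
            ((∏ h ∈ Finset.Icc 1 v, (γ (k + 2 - v) - γ (k + 2 - v + h))) *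
              ∏ h ∈ Finset.Icc 1 (k + 1 - v), (γ h - γ (k + 1 - v + 1))) *
          fG x (T * γ (k + 1 - v + 1) / c) (k + 1 : ℕ) (c / θ) := by
  rw [splineDensity, ← Finset.sum_range_reflect, Finset.sum_mul, Finset.mul_sum, Finset.mul_sum]
  refine Finset.sum_congr rfl fun v hv => ?_
  obtain ⟨m, hm⟩ : ∃ m, m + v = k + 1 :=
    ⟨k + 1 - v, Nat.sub_add_cancel (Nat.le_of_lt_succ (Finset.mem_range.1 hv))⟩
  rw [show k + 2 - 1 - v = m by lia, show k + 1 - v = m by lia, show k + 2 - v = m + 1 by lia,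
    show k + 2 = m + v + 1 by lia, nodalWeight_range_neg]
  linear_combination
    (-1) ^ v / ((∏ h ∈ Finset.Icc 1 v, (γ (m + 1) - γ (m + 1 + h))) *
      ∏ h ∈ Finset.Icc 1 m, (γ h - γ (m + 1))) * exp_mul_truncPow_eq_fG (k := k) hθ hc (γ (m + 1)) x

end Density

theorem conditional_density_mle_case_T_general {j : ℕ} (hj : 1 ≤ j) {γ : ℕ → ℝ}
    (hγ : Set.InjOn γ (Set.Icc 1 (j + 1))) {θ T c : ℝ} (hθ : θ ≠ 0) (hT : 0 ≤ T) (hc : 0 < c) :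
    Measure.map (fun z => totalTimeOnTest j (fun m => γ (m + 1)) T z / c)
        (volume.withDensity fun z : Fin j → ℝ => ENNReal.ofReal ((orderedSimplex j T).indicator
          (fun z => Real.exp (-(1 / θ) * totalTimeOnTest j (fun m => γ (m + 1)) T z)) z)) =
      volume.withDensity fun x =>
        ENNReal.ofReal
          (θ ^ j * ∑ v ∈ range (j + 1),
            (-1 : ℝ) ^ v * Real.exp (-(T / θ) * γ (j - v + 1)) /
                ((∏ h ∈ Finset.Icc 1 v, (γ (j + 1 - v) - γ (j + 1 - v + h))) *
                  (∏ h ∈ Finset.Icc 1 (j - v), (γ h - γ (j - v + 1)))) *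
              fG x (T * γ (j - v + 1) / c) j (c / θ)) := by
  obtain ⟨k, rfl⟩ := Nat.exists_eq_add_of_le' hj
  have ha : Set.InjOn (fun m => γ (m + 1)) (range (k + 2)) := fun l hl m hm h => by
    simp only [Finset.coe_range, Set.mem_Iio] at hl hm
    simpa using hγ ⟨by lia, by lia⟩ ⟨by lia, by lia⟩ h
  rw [withDensity_ofReal_indicator _ measurableSet_orderedSimplex,
    map_totalTimeOnTest_div_withDensity (f := fun w => Real.exp (-(1 / θ) * w)) (by fun_prop)
      ha hT hc.ne']
  simp only [abs_of_pos hc, splineDensity_mul_exp_eq_sum_fG γ hθ hc]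

section Gam

variable (n : ℕ) (R : ℕ → ℕ)

lemma gam_sub_gam_succ (v : ℕ) :
    gam n R (v + 1) - gam n R (v + 1 + 1) = 1 + (R (v + 1) : ℝ) := by
  simp only [gam, Nat.add_sub_cancel, Finset.sum_Icc_succ_top (Nat.le_add_left 1 v)]
  push_cast
  ring

lemma strictAntiOn_gam : StrictAntiOn (gam n R) (Set.Ici 1) :=
  strictAntiOn_of_succ_lt Set.ordConnected_Ici fun v _ hv _ => by
    obtain ⟨w, rfl⟩ := Nat.exists_eq_add_of_le' hv
    rw [Nat.succ_eq_succ, ← sub_pos, gam_sub_gam_succ]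
    positivity

end Gam

/-- Case `Z_{k:m:n} < T < Z_{m:m:n}`: the pushforward of the (sub-probability) measure with
density `1_{0<z₁<⋯<z_j<T} exp(−(1/θ)(Σ z_s(1+R_s) + Tγ_{j+1}))` under
`g(z) = (Σ z_s(1+R_s) + Tγ_{j+1})/i` has Lebesgue density
`x ↦ θ^j Σ_{v=0}^{j} (−1)^v e^{−(T/θ)γ_{j−v+1}} / [⋯] · f_G(x; Tγ_{j−v+1}/i, j, i/θ)`. -/
theorem conditional_density_mle_case_T (n j : ℕ) (hn : 1 ≤ n) (hj : 1 ≤ j) (R : ℕ → ℕ)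
    (hR : (∑ u ∈ Finset.Icc 1 j, R u) + j ≤ n)
    (θ T : ℝ) (hθ : 0 < θ) (hT : 0 < T)
    (i : ℕ) (hi1 : 1 ≤ i) (hij : i ≤ j) :
    Measure.map
        (fun z : Fin j → ℝ =>
          ((∑ h, z h * (1 + (R (h.1 + 1) : ℝ))) + T * gam n R (j + 1)) / i)
        (volume.withDensity fun z : Fin j → ℝ =>
          ENNReal.ofReal
            (Set.indicator {z : Fin j → ℝ | StrictMono z ∧ ∀ h, 0 < z h ∧ z h < T}
              (fun z => Real.exp
                (-(1 / θ) * ((∑ h, z h * (1 + (R (h.1 + 1) : ℝ))) + T * gam n R (j + 1)))) z)) =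
      volume.withDensity fun x =>
        ENNReal.ofReal
          (θ ^ j * ∑ v ∈ Finset.range (j + 1),
            (-1 : ℝ) ^ v * Real.exp (-(T / θ) * gam n R (j - v + 1)) /
                ((∏ h ∈ Finset.Icc 1 v, (gam n R (j + 1 - v) - gam n R (j + 1 - v + h))) *
                  (∏ h ∈ Finset.Icc 1 (j - v), (gam n R h - gam n R (j - v + 1)))) *
              fG x (T * gam n R (j - v + 1) / i) j (i / θ)) := by
  simpa only [totalTimeOnTest, orderedSimplex, gam_sub_gam_succ] using
    conditional_density_mle_case_T_general hj
      ((strictAntiOn_gam n R).injOn.mono Set.Icc_subset_Ici_self) hθ.ne' hT.le (Nat.cast_pos.2 hi1)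
end

section
/- Let f : ℝ → [0, ∞) be a Lebesgue-integrable probability density with cumulative distribution function F(x) = ∫_{−∞}^{x} f(t) dt, let r ≥ 1 be an integer, let a₁, …, a_r > 0 be reals, and let T < x_{r+1} be reals. Then ∫_{T < x₁ < x₂ < ⋯ < x_r < x_{r+1}} ∏_{j=1}^{r} f(x_j)(1 − F(x_j))^{a_j − 1} dx₁ ⋯ dx_r = Σ_{i=0}^{r} c_{i,r}(a) (1 − F(x_{r+1}))^{b_{i,r}(a)} (1 − F(T))^{Σ_{j=1}^{r−i} a_j}, where b_{i,r}(a) = Σ_{j=r−i+1}^{r} a_j and c_{i,r}(a) = (−1)^i / [ (∏_{j=1}^{i} Σ_{k=r−i+1}^{r−i+j} a_k) (∏_{j=1}^{r−i} Σ_{k=j}^{r−i} a_k) ], with the conventions that an empty product equals 1 and an empty sum equals 0. -/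
open MeasureTheory

/-!
A continuous `F` pushes `dF` on `(T, X)` forward to Lebesgue measure on `(F T, F X]`, so the
integral of `(1 - F) ^ (c - 1)` against `dF` is an integral of powers. Peeling off the smallest
variable `x₁` expresses the `r`-fold integral as an integral over `x₁` of `(r - 1)`-fold ones.

With partial sums `S m = a₁ + ⋯ + aₘ`, the claimed value is the divided difference of
`s ↦ p ^ (S r - s) * q ^ (s - S 0)` at `S 0, …, S r`, where `p = 1 - F X` and `q = 1 - F T`: the
coefficients `c_{i,r}` are the Lagrange nodal weights. Integrating the terms of the `(r - 1)`-fold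
formula produces the terms with `m ≥ 1`, and since the nodal weights sum to zero the contributions
of the upper limit collect into the term `m = 0`.
-/

section WithDensity

variable {ι : Type*} [Fintype ι] {α : ι → Type*} [∀ i, MeasurableSpace (α i)]
  {μ : ∀ i, Measure (α i)} [∀ i, SigmaFinite (μ i)] {f : ∀ i, α i → ℝ}

theorem pi_withDensity_ofReal (hf0 : ∀ i x, 0 ≤ f i x) (hfi : ∀ i, Integrable (f i) (μ i)) :
    Measure.pi (fun i ↦ (μ i).withDensity fun x ↦ ENNReal.ofReal (f i x)) =
      (Measure.pi μ).withDensity fun x ↦ ENNReal.ofReal (∏ i, f i (x i)) := by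
  have (i : ι) : IsFiniteMeasure ((μ i).withDensity fun x ↦ ENNReal.ofReal (f i x)) :=
    isFiniteMeasure_withDensity_ofReal (hfi i).2
  refine Measure.pi_eq fun s hs ↦ ?_
  have hint : Integrable (fun x ↦ ∏ i, f i (x i)) (Measure.pi fun i ↦ (μ i).restrict (s i)) :=
    Integrable.fintype_prod_dep fun i ↦ (hfi i).restrict
  calc (Measure.pi μ).withDensity (fun x ↦ ENNReal.ofReal (∏ i, f i (x i))) (Set.univ.pi s)
      = ENNReal.ofReal (∫ x, ∏ i, f i (x i) ∂Measure.pi fun i ↦ (μ i).restrict (s i)) := by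
        rw [withDensity_apply _ (.univ_pi hs), Measure.restrict_pi_pi,
          ofReal_integral_eq_lintegral_ofReal hint
            (ae_of_all _ fun x ↦ Finset.prod_nonneg fun i _ ↦ hf0 i (x i))]
    _ = ∏ i, ENNReal.ofReal (∫ x in s i, f i x ∂μ i) := by
        rw [integral_fintype_prod_eq_prod, ENNReal.ofReal_prod_of_nonneg
          fun i _ ↦ integral_nonneg (hf0 i)]
    _ = ∏ i, (μ i).withDensity (fun x ↦ ENNReal.ofReal (f i x)) (s i) := by
        refine Finset.prod_congr rfl fun i _ ↦ ?_
        rw [withDensity_apply _ (hs i), ofReal_integral_eq_lintegral_ofReal (hfi i).restrict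
          (ae_of_all _ (hf0 i))]

theorem setIntegral_pi_withDensity_ofReal (hf0 : ∀ i x, 0 ≤ f i x)
    (hfi : ∀ i, Integrable (f i) (μ i)) {E : Type*} [NormedAddCommGroup E] [NormedSpace ℝ E]
    {s : Set (∀ i, α i)} (hs : MeasurableSet s) (g : (∀ i, α i) → E) :
    ∫ x in s, g x ∂Measure.pi (fun i ↦ (μ i).withDensity fun x ↦ ENNReal.ofReal (f i x)) =
      ∫ x in s, (∏ i, f i (x i)) • g x ∂Measure.pi μ := by
  have hmeas : AEMeasurable (fun x ↦ ENNReal.ofReal (∏ i, f i (x i))) ((Measure.pi μ).restrict s) :=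
    (Integrable.fintype_prod_dep hfi).aemeasurable.ennreal_ofReal.restrict
  rw [pi_withDensity_ofReal hf0 hfi, setIntegral_withDensity_eq_setIntegral_toReal_smul₀ hmeas
    (ae_of_all _ fun _ ↦ ENNReal.ofReal_lt_top) _ hs]
  simp only [ENNReal.toReal_ofReal (Finset.prod_nonneg fun i _ ↦ hf0 i _)]

end WithDensity

theorem integral_pi_fin_succ {n : ℕ} {α : Type*} [MeasurableSpace α] {μ : Fin (n + 1) → Measure α}
    [∀ i, SigmaFinite (μ i)] {E : Type*} [NormedAddCommGroup E] [NormedSpace ℝ E]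
    {g : (Fin (n + 1) → α) → E} (hg : Integrable g (Measure.pi μ)) :
    ∫ x, g x ∂Measure.pi μ =
      ∫ t, ∫ y, g (Fin.cons t y) ∂Measure.pi (fun i ↦ μ i.succ) ∂μ 0 := by
  let e := (MeasurableEquiv.piFinSuccAbove (fun _ ↦ α) (0 : Fin (n + 1))).symm
  have hmp := (measurePreserving_piFinSuccAbove μ 0).symm
  have e_apply (z : α × (Fin n → α)) : e z = Fin.cons z.1 z.2 := Fin.insertNth_zero' ..
  have hge : Integrable (fun z ↦ g (e z)) ((μ 0).prod (Measure.pi fun i ↦ μ i.succ)) :=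
    (hmp.integrable_comp_emb e.measurableEmbedding).2 hg
  calc ∫ x, g x ∂Measure.pi μ
      = ∫ z, g (e z) ∂(μ 0).prod (Measure.pi fun i ↦ μ i.succ) := (hmp.integral_comp' g).symm
    _ = ∫ t, ∫ y, g (Fin.cons t y) ∂Measure.pi (fun i ↦ μ i.succ) ∂μ 0 := by
        rw [integral_prod _ hge]
        simp only [e_apply]

section OrderedTuples

variable {α : Type*} [LinearOrder α]

/-- The increasing `n`-tuples with entries in the open interval `(a, b)`, i.e. the domain
`a < x₁ < ⋯ < xₙ < b` of the iterated integrals. -/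
def orderedTuples (n : ℕ) (a b : α) : Set (Fin n → α) :=
  {x | StrictMono x ∧ ∀ i, a < x i ∧ x i < b}

theorem cons_mem_orderedTuples_succ {n : ℕ} {a b t : α} {y : Fin n → α} :
    (Fin.cons t y : Fin (n + 1) → α) ∈ orderedTuples (n + 1) a b ↔
      t ∈ Set.Ioo a b ∧ y ∈ orderedTuples n t b := by
  simp only [orderedTuples, Set.mem_ofPred_eq, Fin.strictMono_cons, Fin.forall_fin_succ,
    Fin.cons_zero, Fin.cons_succ, Set.mem_Ioo]
  exact ⟨fun ⟨⟨hty, hy⟩, ht, hyb⟩ ↦ ⟨ht, hy, fun i ↦ ⟨hty i, (hyb i).2⟩⟩,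
    fun ⟨ht, hy, hyb⟩ ↦ ⟨⟨fun i ↦ (hyb i).1, hy⟩, ht, fun i ↦ ⟨ht.1.trans (hyb i).1, (hyb i).2⟩⟩⟩

theorem orderedTuples_subset_pi_Ioo (n : ℕ) (a b : α) :
    orderedTuples n a b ⊆ Set.univ.pi fun _ ↦ Set.Ioo a b :=
  fun _ hx i _ ↦ hx.2 i

theorem integrableOn_orderedTuples_prod [MeasurableSpace α] {μ : Measure α} [SigmaFinite μ]
    {𝕜 : Type*} [NormedCommRing 𝕜] {n : ℕ} {a b : α} {g : Fin n → α → 𝕜}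
    (hg : ∀ i, IntegrableOn (g i) (Set.Ioo a b) μ) :
    IntegrableOn (fun x ↦ ∏ i, g i (x i)) (orderedTuples n a b) (Measure.pi fun _ ↦ μ) := by
  refine IntegrableOn.mono_set ?_ (orderedTuples_subset_pi_Ioo n a b)
  rw [IntegrableOn, Measure.restrict_pi_pi]
  exact Integrable.fintype_prod_dep hg

variable [TopologicalSpace α] [OrderClosedTopology α] [SecondCountableTopology α]
  [MeasurableSpace α] [OpensMeasurableSpace α]

theorem measurableSet_orderedTuples (n : ℕ) (a b : α) : MeasurableSet (orderedTuples n a b) := by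
  have eq_inter : orderedTuples n a b =
      (⋂ (i) (j) (_ : i < j), {x | x i < x j}) ∩ ⋂ i, {x | a < x i} ∩ {x | x i < b} := by
    ext x
    simp [orderedTuples, StrictMono]
  rw [eq_inter]
  exact .inter
    (.iInter fun i ↦ .iInter fun j ↦ .iInter fun _ ↦ measurableSet_lt (by fun_prop) (by fun_prop))
    (.iInter fun i ↦ (measurableSet_lt (by fun_prop) (by fun_prop)).inter
      (measurableSet_lt (by fun_prop) (by fun_prop)))

theorem setIntegral_orderedTuples_succ {E : Type*} [NormedAddCommGroup E] [NormedSpace ℝ E]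
    {μ : Measure α} [SigmaFinite μ] {n : ℕ} {a b : α} {g : (Fin (n + 1) → α) → E}
    (hg : IntegrableOn g (orderedTuples (n + 1) a b) (Measure.pi fun _ ↦ μ)) :
    ∫ x in orderedTuples (n + 1) a b, g x ∂Measure.pi (fun _ ↦ μ) =
      ∫ t in Set.Ioo a b, ∫ y in orderedTuples n t b, g (Fin.cons t y) ∂Measure.pi (fun _ ↦ μ)
        ∂μ := by
  have indicator_cons (t : α) (y : Fin n → α) :
      (orderedTuples (n + 1) a b).indicator g (Fin.cons t y) =
        (Set.Ioo a b).indicator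
          (fun t ↦ (orderedTuples n t b).indicator (fun y ↦ g (Fin.cons t y)) y) t := by
    classical
    simp only [Set.indicator_apply, cons_mem_orderedTuples_succ, ite_and]
  rw [← integral_indicator (measurableSet_orderedTuples _ a b), integral_pi_fin_succ
    ((integrable_indicator_iff (measurableSet_orderedTuples _ a b)).2 hg),
    ← integral_indicator measurableSet_Ioo]
  congr 1 with t
  simp only [indicator_cons]
  by_cases ht : t ∈ Set.Ioo a b
  · simp only [Set.indicator_of_mem ht, integral_indicator (measurableSet_orderedTuples n t b)]
  · simp only [Set.indicator_of_notMem ht, integral_zero]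

end OrderedTuples

section Stieltjes

variable (F : StieltjesFunction ℝ) {a b c : ℝ}

theorem restrict_Ioo_eq_restrict_Ioc_of_continuous (hF : Continuous F) :
    F.measure.restrict (Set.Ioo a b) = F.measure.restrict (Set.Ioc a b) := by
  have : NullSingletonClass F.measure := ⟨fun x ↦ by
    rw [F.measure_singleton, hF.continuousWithinAt.leftLim_eq, sub_self, ENNReal.ofReal_zero]⟩
  exact restrict_Ioo_eq_restrict_Ioc

theorem exists_Ioc_inter_preimage_Iic_eq {g : ℝ → ℝ} (hmono : Monotone g) (hcont : Continuous g)
    (hab : a ≤ b) (hc : g a ≤ c) :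
    ∃ z, g z = min (g b) c ∧ g ⁻¹' Set.Iic c ∩ Set.Ioc a b = Set.Ioc a z := by
  obtain ⟨z, ⟨⟨_, hzb⟩, hzc⟩, hmax⟩ :=
    (isCompact_Icc.inter_right (isClosed_Iic.preimage hcont)).exists_isGreatest
      ⟨a, ⟨le_rfl, hab⟩, hc⟩
  refine ⟨z, le_antisymm (le_min (hmono hzb) hzc) ?_, ?_⟩
  · obtain ⟨w, hw, hgw⟩ := intermediate_value_Icc hab hcont.continuousOn
      ⟨le_min (hmono hab) hc, min_le_left _ _⟩
    exact hgw.symm.trans_le (hmono (hmax ⟨hw, hgw.trans_le (min_le_right _ _)⟩))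
  · ext x
    exact ⟨fun ⟨hxc, hax, hxb⟩ ↦ ⟨hax, hmax ⟨⟨hax.le, hxb⟩, hxc⟩⟩,
      fun ⟨hax, hxz⟩ ↦ ⟨(hmono hxz).trans hzc, hax, hxz.trans hzb⟩⟩

theorem measurePreserving_restrict_Ioo (hF : Continuous F) (hab : a ≤ b) :
    MeasurePreserving F (F.measure.restrict (Set.Ioo a b))
      (volume.restrict (Set.Ioc (F a) (F b))) := by
  refine ⟨hF.measurable, ?_⟩
  rw [restrict_Ioo_eq_restrict_Ioc_of_continuous F hF]
  have : IsFiniteMeasure (F.measure.restrict (Set.Ioc a b)) := ⟨by simp⟩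
  refine Measure.ext_of_Iic _ _ fun c ↦ ?_
  rw [Measure.map_apply hF.measurable measurableSet_Iic,
    Measure.restrict_apply (hF.measurable measurableSet_Iic),
    Measure.restrict_apply measurableSet_Iic]
  rcases lt_or_ge c (F a) with hc | hc
  · have preimage_empty : F ⁻¹' Set.Iic c ∩ Set.Ioc a b = ∅ :=
      Set.eq_empty_of_forall_notMem fun x ⟨hxc, hx⟩ ↦
        (hc.trans_le (F.mono hx.1.le)).not_ge hxc
    rw [preimage_empty, Set.inter_comm, Set.Ioc_inter_Iic, Set.Ioc_eq_empty (by simp [hc.le])]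
    simp
  · obtain ⟨z, hFz, hpre⟩ := exists_Ioc_inter_preimage_Iic_eq F.mono hF hab hc
    rw [hpre, F.measure_Ioc, hFz, Set.inter_comm, Set.Ioc_inter_Iic, Real.volume_Ioc]

theorem ae_restrict_Ioo_lt (hF : Continuous F) (hab : a ≤ b) :
    ∀ᵐ x ∂F.measure.restrict (Set.Ioo a b), F x < F b := by
  have hne : ∀ᵐ y ∂volume.restrict (Set.Ioc (F a) (F b)), y ≠ F b :=
    ae_restrict_of_ae (Measure.ae_ne volume (F b))
  filter_upwards [(measurePreserving_restrict_Ioo F hF hab).quasiMeasurePreserving.ae hne,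
    ae_restrict_mem measurableSet_Ioo] with x hx hxb
  exact (F.mono hxb.2.le).lt_of_ne hx

theorem intervalIntegrable_one_sub_rpow (hc : 0 < c) (p q : ℝ) :
    IntervalIntegrable (fun y : ℝ ↦ (1 - y) ^ (c - 1)) volume p q := by
  simpa using (intervalIntegral.intervalIntegrable_rpow' (a := 1 - p) (b := 1 - q)
    (r := c - 1) (by linarith)).comp_sub_left 1

theorem integrableOn_one_sub_rpow (hF : Continuous F) (hab : a ≤ b) (hc : 0 < c) :
    IntegrableOn (fun x ↦ (1 - F x) ^ (c - 1)) (Set.Ioo a b) F.measure :=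
  (measurePreserving_restrict_Ioo F hF hab).integrable_comp_of_integrable
    ((intervalIntegrable_iff_integrableOn_Ioc_of_le (F.mono hab)).1
      (intervalIntegrable_one_sub_rpow hc _ _))

theorem setIntegral_one_sub_rpow (hF : Continuous F) (hab : a ≤ b) (hc : 0 < c) :
    ∫ x in Set.Ioo a b, (1 - F x) ^ (c - 1) ∂F.measure =
      ((1 - F a) ^ c - (1 - F b) ^ c) / c := by
  calc ∫ x in Set.Ioo a b, (1 - F x) ^ (c - 1) ∂F.measure
      = ∫ y in F a..F b, (1 - y) ^ (c - 1) := by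
        rw [intervalIntegral.integral_of_le (F.mono hab),
          ← (measurePreserving_restrict_Ioo F hF hab).map_eq,
          integral_map hF.aemeasurable (Measurable.aestronglyMeasurable (by fun_prop))]
    _ = ((1 - F a) ^ c - (1 - F b) ^ c) / c := by
        rw [intervalIntegral.integral_comp_sub_left (fun y ↦ y ^ (c - 1)),
          integral_rpow (Or.inl (by linarith)), sub_add_cancel]

theorem exists_stieltjesFunction_of_density {f : ℝ → ℝ} (hf0 : ∀ x, 0 ≤ f x) (hfi : Integrable f)
    {F : ℝ → ℝ} (hF : ∀ x, F x = ∫ t in Set.Iic x, f t) :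
    ∃ G : StieltjesFunction ℝ, ⇑G = F ∧ Continuous G ∧
      G.measure = volume.withDensity fun x ↦ ENNReal.ofReal (f x) := by
  have sub_eq (u v : ℝ) : F v - F u = ∫ t in u..v, f t := by
    rw [hF, hF, intervalIntegral.integral_Iic_sub_Iic hfi.integrableOn hfi.integrableOn]
  have hcont : Continuous F := by
    rw [funext fun x ↦ eq_add_of_sub_eq' (sub_eq 0 x)]
    exact continuous_const.add
      (intervalIntegral.continuous_primitive (fun _ _ ↦ hfi.intervalIntegrable) 0)
  have hmono : Monotone F := fun u v huv ↦ sub_nonneg.1 <|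
    (intervalIntegral.integral_nonneg huv fun t _ ↦ hf0 t).trans_eq (sub_eq u v).symm
  let G : StieltjesFunction ℝ := ⟨F, hmono, fun _ ↦ hcont.continuousWithinAt⟩
  refine ⟨G, rfl, hcont, Measure.ext_of_Ioc _ _ fun u v huv ↦ ?_⟩
  rw [G.measure_Ioc, withDensity_apply _ measurableSet_Ioc,
    ← ofReal_integral_eq_lintegral_ofReal hfi.integrableOn (ae_of_all _ hf0),
    ← intervalIntegral.integral_of_le huv.le, ← sub_eq]

end Stieltjes

theorem sum_nodalWeight_eq_zero {ι K : Type*} [DecidableEq ι] [Field K] {s : Finset ι} {v : ι → K}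
    (hv : Set.InjOn v s) (hs : 1 < s.card) : ∑ i ∈ s, Lagrange.nodalWeight s v i = 0 := by
  have hdeg : (1 : Polynomial K).degree < s.card := by
    rw [Polynomial.degree_one]
    exact_mod_cast zero_lt_one.trans hs
  have hcoeff := Lagrange.coeff_eq_sum hv hdeg
  rw [Polynomial.coeff_one, if_neg (by lia)] at hcoeff
  simpa only [Lagrange.nodalWeight, Finset.prod_inv_distrib, Polynomial.eval_one, one_div]
    using hcoeff.symm

theorem nodalWeight_range_succ {K : Type*} [Field K] (v : ℕ → K) (n m : ℕ) :
    Lagrange.nodalWeight (Finset.range (n + 1)) v (m + 1) =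
      (v (m + 1) - v 0)⁻¹ * Lagrange.nodalWeight (Finset.range n) (fun k ↦ v (k + 1)) m := by
  have erase_eq : (Finset.range (n + 1)).erase (m + 1) =
      insert 0 (((Finset.range n).erase m).map (addRightEmbedding 1)) := by
    ext j
    cases j <;> simp
  rw [Lagrange.nodalWeight, erase_eq, Finset.prod_insert (by simp), Finset.prod_map]
  rfl

theorem nodalWeight_range_add {K : Type*} [Field K] (v : ℕ → K) (m i : ℕ) :
    Lagrange.nodalWeight (Finset.range (m + 1 + i)) v m =
      (-1) ^ i / ((∏ j ∈ Finset.range i, (v (m + (j + 1)) - v m)) *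
        ∏ j ∈ Finset.range m, (v m - v j)) := by
  induction i with
  | zero => simp [Lagrange.nodalWeight, Finset.range_add_one]
  | succ i ih =>
    rw [← add_assoc, Finset.range_add_one, Lagrange.nodalWeight,
      Finset.erase_insert_of_ne (by lia), Finset.prod_insert (by simp), ← Lagrange.nodalWeight, ih,
      Finset.prod_range_succ, ← neg_sub, inv_neg, add_assoc, add_comm 1 i]
    simp only [div_eq_mul_inv, mul_inv]
    ring

theorem prod_Icc_one_eq_prod_range {M : Type*} [CommMonoid M] (g : ℕ → M) (n : ℕ) :
    ∏ j ∈ Finset.Icc 1 n, g j = ∏ j ∈ Finset.range n, g (j + 1) := by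
  rw [Finset.range_eq_Ico, Finset.prod_Ico_add' g 0 n 1]
  rfl

theorem sum_Icc_sub {G : Type*} [AddCommGroup G] (g : ℕ → G) {p q : ℕ} (hpq : p ≤ q) :
    ∑ k ∈ Finset.Icc 1 q, g k - ∑ k ∈ Finset.Icc 1 p, g k = ∑ k ∈ Finset.Icc (p + 1) q, g k := by
  simpa [sub_eq_iff_eq_add', ← Finset.Icc_add_one_left_eq_Ioc] using
    (Finset.sum_Ioc_consecutive g p.zero_le hpq).symm

/-- The divided difference of the function `s ↦ p ^ (S n - s) * q ^ (s - S 0)` at the nodes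
`S 0, …, S n`: the value of the iterated integral whose partial sums of exponents are `S`, with
`p` and `q` the values of `1 - F` at the upper and the lower endpoint. -/
noncomputable def rpowDividedDiff (S : ℕ → ℝ) (n : ℕ) (p q : ℝ) : ℝ :=
  ∑ m ∈ Finset.range (n + 1),
    Lagrange.nodalWeight (Finset.range (n + 1)) S m * (p ^ (S n - S m) * q ^ (S m - S 0))

theorem rpow_mul_rpowDividedDiff_succ {q : ℝ} (hq : 0 < q) (S : ℕ → ℝ) (n : ℕ) (p : ℝ) :
    q ^ (S 1 - S 0 - 1) * rpowDividedDiff (fun k ↦ S (k + 1)) n p q =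
      ∑ m ∈ Finset.range (n + 1),
        Lagrange.nodalWeight (Finset.range (n + 1)) (fun k ↦ S (k + 1)) m *
          p ^ (S (n + 1) - S (m + 1)) * q ^ (S (m + 1) - S 0 - 1) := by
  rw [rpowDividedDiff, Finset.mul_sum]
  refine Finset.sum_congr rfl fun m _ ↦ ?_
  have hpow : q ^ (S (m + 1) - S 0 - 1) = q ^ (S 1 - S 0 - 1) * q ^ (S (m + 1) - S 1) := by
    rw [← Real.rpow_add hq]
    ring_nf
  rw [hpow]
  ring

theorem rpowDividedDiff_succ {p : ℝ} (hp : 0 ≤ p) {S : ℕ → ℝ} {n : ℕ}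
    (hS : StrictMonoOn S (Set.Iic (n + 1))) (q : ℝ) :
    rpowDividedDiff S (n + 1) p q =
      ∑ m ∈ Finset.range (n + 1),
        Lagrange.nodalWeight (Finset.range (n + 1)) (fun k ↦ S (k + 1)) m *
          p ^ (S (n + 1) - S (m + 1)) *
            ((q ^ (S (m + 1) - S 0) - p ^ (S (m + 1) - S 0)) / (S (m + 1) - S 0)) := by
  let w := Lagrange.nodalWeight (Finset.range (n + 2)) S
  have weight_zero : w 0 = -∑ m ∈ Finset.range (n + 1), w (m + 1) := by
    have hcoe : (Finset.range (n + 2) : Set ℕ) = Set.Iic (n + 1) :=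
      Set.ext fun _ ↦ by simp [Nat.lt_succ_iff]
    have hsum : ∑ m ∈ Finset.range (n + 2), w m = 0 :=
      sum_nodalWeight_eq_zero (hcoe ▸ hS.injOn) (by simp)
    rw [Finset.sum_range_succ'] at hsum
    exact eq_neg_of_add_eq_zero_right hsum
  rw [rpowDividedDiff, Finset.sum_range_succ']
  change ∑ m ∈ Finset.range (n + 1), w (m + 1) * _ + w 0 * _ = _
  rw [weight_zero, neg_mul, Finset.sum_mul, ← sub_eq_add_neg, ← Finset.sum_sub_distrib]
  refine Finset.sum_congr rfl fun m hm ↦ ?_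
  have hmn : m + 1 ≤ n + 1 := Finset.mem_range.1 hm
  have hpow : p ^ (S (n + 1) - S 0) = p ^ (S (n + 1) - S (m + 1)) * p ^ (S (m + 1) - S 0) := by
    rw [← Real.rpow_add_of_nonneg hp (sub_nonneg.2 (hS.monotoneOn hmn Set.self_mem_Iic hmn))
      (sub_nonneg.2 (hS.monotoneOn (Nat.zero_le _) hmn (Nat.zero_le _))), sub_add_sub_cancel]
  have weight_succ := nodalWeight_range_succ S (n + 1) m
  rw [show w (m + 1) = _ from weight_succ, hpow, sub_self, Real.rpow_zero]
  ring

theorem rpowDividedDiff_partialSums (a : ℕ → ℝ) (r : ℕ) (p q : ℝ) :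
    rpowDividedDiff (fun m ↦ ∑ k ∈ Finset.Icc 1 m, a k) r p q =
      ∑ i ∈ Finset.range (r + 1),
        ((-1 : ℝ) ^ i /
            ((∏ j ∈ Finset.Icc 1 i, ∑ k ∈ Finset.Icc (r - i + 1) (r - i + j), a k) *
              (∏ j ∈ Finset.Icc 1 (r - i), ∑ k ∈ Finset.Icc j (r - i), a k))) *
          p ^ (∑ j ∈ Finset.Icc (r - i + 1) r, a j) *
          q ^ (∑ j ∈ Finset.Icc 1 (r - i), a j) := by
  rw [rpowDividedDiff, ← Finset.sum_range_reflect]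
  refine Finset.sum_congr rfl fun i hi ↦ ?_
  obtain ⟨m, rfl⟩ := Nat.exists_eq_add_of_le' (Finset.mem_range_succ_iff.1 hi)
  have den_above (j) : ∑ k ∈ Finset.Icc 1 (m + (j + 1)), a k - ∑ k ∈ Finset.Icc 1 m, a k =
      ∑ k ∈ Finset.Icc (m + 1) (m + (j + 1)), a k := sum_Icc_sub a (by lia)
  have den_below : ∏ j ∈ Finset.range m, (∑ k ∈ Finset.Icc 1 m, a k - ∑ k ∈ Finset.Icc 1 j, a k) =
      ∏ j ∈ Finset.range m, ∑ k ∈ Finset.Icc (j + 1) m, a k :=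
    Finset.prod_congr rfl fun j hj ↦ sum_Icc_sub a (Finset.mem_range.1 hj).le
  rw [show m + i + 1 - 1 - i = m by lia, show m + i + 1 = m + 1 + i by lia, nodalWeight_range_add,
    Nat.add_sub_cancel, prod_Icc_one_eq_prod_range, prod_Icc_one_eq_prod_range,
    sum_Icc_sub a (by lia)]
  simp only [den_above, den_below, Finset.Icc_eq_empty_of_lt zero_lt_one, Finset.sum_empty,
    sub_zero]
  ring

theorem setIntegral_orderedTuples_prod_one_sub_rpow {F : StieltjesFunction ℝ} (hF : Continuous F)
    {X : ℝ} (hFX : F X ≤ 1) {n : ℕ} {S : ℕ → ℝ} (hS : StrictMonoOn S (Set.Iic n)) {T : ℝ}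
    (hTX : T ≤ X) :
    ∫ x in orderedTuples n T X, ∏ j : Fin n, (1 - F (x j)) ^ (S (j + 1) - S j - 1)
        ∂Measure.pi (fun _ ↦ F.measure) =
      rpowDividedDiff S n (1 - F X) (1 - F T) := by
  induction n generalizing S T with
  | zero =>
    have eq_univ : orderedTuples 0 T X = Set.univ := by
      ext x
      simp [orderedTuples, Subsingleton.strictMono]
    simp [eq_univ, rpowDividedDiff, Lagrange.nodalWeight, Measure.real]
  | succ n ih =>
    have hgap (m : ℕ) (hm : m ∈ Finset.range (n + 1)) : 0 < S (m + 1) - S 0 :=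
      sub_pos.2 (hS (Nat.zero_le _) (Finset.mem_range.1 hm) m.succ_pos)
    have hshift : StrictMonoOn (fun k ↦ S (k + 1)) (Set.Iic n) := fun _ hi _ hj hij ↦
      hS (Nat.succ_le_succ hi) (Nat.succ_le_succ hj) (Nat.succ_lt_succ hij)
    have hint : IntegrableOn
        (fun x : Fin (n + 1) → ℝ ↦ ∏ j : Fin (n + 1), (1 - F (x j)) ^ (S (j + 1) - S j - 1))
        (orderedTuples (n + 1) T X) (Measure.pi fun _ ↦ F.measure) :=
      integrableOn_orderedTuples_prod fun j ↦ integrableOn_one_sub_rpow F hF hTX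
        (sub_pos.2 (hS j.2.le (Nat.succ_le_of_lt j.2) j.1.lt_succ_self))
    calc _ = ∫ t in Set.Ioo T X, (1 - F t) ^ (S 1 - S 0 - 1) *
            rpowDividedDiff (fun k ↦ S (k + 1)) n (1 - F X) (1 - F t) ∂F.measure := by
          rw [setIntegral_orderedTuples_succ hint]
          refine setIntegral_congr_fun measurableSet_Ioo fun t ht ↦ ?_
          simp only [Fin.prod_univ_succ, Fin.cons_zero, Fin.cons_succ, integral_const_mul]
          rw [← ih hshift ht.2.le]
          rfl
      _ = ∫ t in Set.Ioo T X, ∑ m ∈ Finset.range (n + 1),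
            Lagrange.nodalWeight (Finset.range (n + 1)) (fun k ↦ S (k + 1)) m *
              (1 - F X) ^ (S (n + 1) - S (m + 1)) *
                (1 - F t) ^ (S (m + 1) - S 0 - 1) ∂F.measure := by
          -- `0 ^ x * 0 ^ y = 0 ^ (x + y)` can fail, but `F t = 1` only on a `dF`-null set.
          refine integral_congr_ae ?_
          filter_upwards [ae_restrict_Ioo_lt F hF hTX] with t ht
          exact rpow_mul_rpowDividedDiff_succ (sub_pos.2 (ht.trans_le hFX)) S n _
      _ = rpowDividedDiff S (n + 1) (1 - F X) (1 - F T) := by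
          rw [integral_finsetSum _ fun m hm ↦
              (integrableOn_one_sub_rpow F hF hTX (hgap m hm)).const_mul _,
            rpowDividedDiff_succ (sub_nonneg.2 hFX) hS]
          refine Finset.sum_congr rfl fun m hm ↦ ?_
          rw [integral_const_mul, setIntegral_one_sub_rpow F hF hTX (hgap m hm)]

theorem balakrishnan_childs_chandrasekar_lemma_general
    (F : StieltjesFunction ℝ) (hF : Continuous F) (r : ℕ) (a : ℕ → ℝ)
    (ha : ∀ j ∈ Finset.Icc 1 r, 0 < a j) (T X : ℝ) (hTX : T ≤ X) (hFX : F X ≤ 1) :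
    ∫ x in orderedTuples r T X, ∏ j : Fin r, (1 - F (x j)) ^ (a (j.1 + 1) - 1)
        ∂Measure.pi (fun _ ↦ F.measure) =
      ∑ i ∈ Finset.range (r + 1),
        ((-1 : ℝ) ^ i /
            ((∏ j ∈ Finset.Icc 1 i, ∑ k ∈ Finset.Icc (r - i + 1) (r - i + j), a k) *
              (∏ j ∈ Finset.Icc 1 (r - i), ∑ k ∈ Finset.Icc j (r - i), a k))) *
          (1 - F X) ^ (∑ j ∈ Finset.Icc (r - i + 1) r, a j) *
          (1 - F T) ^ (∑ j ∈ Finset.Icc 1 (r - i), a j) := by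
  let S (m : ℕ) : ℝ := ∑ k ∈ Finset.Icc 1 m, a k
  have sub_eq (m : ℕ) : S (m + 1) - S m = a (m + 1) := by
    simp [S, Finset.sum_Icc_succ_top]
  have hS : StrictMonoOn S (Set.Iic r) := strictMonoOn_Iic_of_lt_succ fun m hm ↦
    sub_pos.1 ((ha (m + 1) (Finset.mem_Icc.2 ⟨by lia, hm⟩)).trans_eq (sub_eq m).symm)
  rw [← rpowDividedDiff_partialSums, ← setIntegral_orderedTuples_prod_one_sub_rpow hF hFX hS hTX]
  simp only [sub_eq]

/-- Lemma 1 of Balakrishnan, Childs and Chandrasekar: for a Lebesgue-integrable probability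
density `f` with CDF `F`, reals `a₁, …, a_r > 0` and `T < X`,
`∫_{T<x₁<⋯<x_r<X} ∏_{j=1}^r f(x_j)(1−F(x_j))^{a_j−1} dx
  = Σ_{i=0}^r c_{i,r}(a) (1−F(X))^{b_{i,r}(a)} (1−F(T))^{Σ_{j=1}^{r−i} a_j}`. -/
theorem balakrishnan_childs_chandrasekar_lemma
    (f : ℝ → ℝ) (hf0 : ∀ x, 0 ≤ f x) (hfi : Integrable f)
    (hf1 : ∫ x, f x = 1)
    (F : ℝ → ℝ) (hF : ∀ x, F x = ∫ t in Set.Iic x, f t)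
    (r : ℕ) (hr : 1 ≤ r) (a : ℕ → ℝ) (ha : ∀ j ∈ Finset.Icc 1 r, 0 < a j)
    (T X : ℝ) (hTX : T < X) :
    ∫ x in {x : Fin r → ℝ | StrictMono x ∧ ∀ i, T < x i ∧ x i < X},
        ∏ j : Fin r, f (x j) * (1 - F (x j)) ^ (a (j.1 + 1) - 1) =
      ∑ i ∈ Finset.range (r + 1),
        ((-1 : ℝ) ^ i /
            ((∏ j ∈ Finset.Icc 1 i, ∑ k ∈ Finset.Icc (r - i + 1) (r - i + j), a k) *
              (∏ j ∈ Finset.Icc 1 (r - i), ∑ k ∈ Finset.Icc j (r - i), a k))) *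
          (1 - F X) ^ (∑ j ∈ Finset.Icc (r - i + 1) r, a j) *
          (1 - F T) ^ (∑ j ∈ Finset.Icc 1 (r - i), a j) := by
  obtain ⟨G, rfl, hG, hGf⟩ := exists_stieltjesFunction_of_density hf0 hfi hF
  have hGX : G X ≤ 1 := hF X ▸ hf1 ▸ setIntegral_le_integral hfi (ae_of_all _ hf0)
  rw [← balakrishnan_childs_chandrasekar_lemma_general G hG r a ha T X hTX.le hGX, hGf,
    setIntegral_pi_withDensity_ofReal (fun _ ↦ hf0) (fun _ ↦ hfi)
      (measurableSet_orderedTuples r T X)]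
  simp only [smul_eq_mul, Finset.prod_mul_distrib]
  rfl
end
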